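/- Let a₀ ∈ (0,1) be the minimal root of 4a(2−a)(1−a)²(a²−2a+2)² = 1 and let a ∈ [a₀, 1). Then sup{ δ ∈ (a−1, 0) : F(a−1, 1−a; 1; 1−x²) < F(a−1−δ, 1−a+δ; 1; 1−x³) for all x ∈ (0,1) } = (√6/3 − 1)(1−a). -/

import Mathlib

open Real Set Filter Topology

/-- The Gaussian hypergeometric function `F(a,b;c;x)`, defined as a power series
with Pochhammer (shifted factorial) coefficients. -/
noncomputable def hyp (a b c x : ℝ) : ℝ :=
  ∑' n : ℕ, ((∏ i ∈ Finset.range n, (a + i)) * (∏ i ∈ Finset.range n, (b + i)) /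
    ((∏ i ∈ Finset.range n, (c + i)) * (Nat.factorial n))) * x ^ n

/-- The coefficients of `F(1-q,1+q;2;x)`, as functions of `v = q ^ 2`. -/
noncomputable def hypKerCoeff (v : ℝ) (n : ℕ) : ℝ :=
  (∏ i ∈ Finset.range n, (((i : ℝ) + 1) ^ 2 - v)) / (n.factorial * (n + 1).factorial)

/-- The function `F(1-q,1+q;2;x)` with `v = q ^ 2`. -/
noncomputable def hypKer (v x : ℝ) : ℝ := ∑' n : ℕ, hypKerCoeff v n * x ^ n

lemma hypKerCoeff_zero (v : ℝ) : hypKerCoeff v 0 = 1 := by simp [hypKerCoeff]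

lemma hypKerCoeff_succ (v : ℝ) (n : ℕ) :
    hypKerCoeff v (n + 1) = hypKerCoeff v n * (((n : ℝ) + 1) ^ 2 - v) / (((n : ℝ) + 1) * (n + 2)) := by
  have h := Nat.factorial_pos n
  simp only [hypKerCoeff, Finset.prod_range_succ, Nat.factorial_succ]
  push_cast
  field_simp
  ring

lemma hypKerCoeff_nonneg {v : ℝ} (hv : v ≤ 1) (n : ℕ) : 0 ≤ hypKerCoeff v n := by
  refine div_nonneg (Finset.prod_nonneg fun i _ => ?_) (by positivity)
  nlinarith [(Nat.cast_nonneg i : (0 : ℝ) ≤ i)]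

lemma hypKerCoeff_succ_le {v : ℝ} (hv0 : 0 ≤ v) (hv : v ≤ 1) (n : ℕ) :
    hypKerCoeff v (n + 1) ≤ (1 - v) / (n + 2) := by
  induction n with
  | zero => simp [hypKerCoeff_succ, hypKerCoeff_zero]
  | succ n ih =>
    rw [hypKerCoeff_succ]
    push_cast
    rw [div_le_div_iff₀ (by positivity) (by positivity)]
    rw [le_div_iff₀ (by positivity)] at ih
    have h1 : (0 : ℝ) ≤ n := Nat.cast_nonneg n
    have h2 : hypKerCoeff v (n + 1) * (((n : ℝ) + 1 + 1) ^ 2 - v)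
        ≤ hypKerCoeff v (n + 1) * ((n : ℝ) + 2) ^ 2 :=
      mul_le_mul_of_nonneg_left (by nlinarith) (hypKerCoeff_nonneg hv _)
    have h3 := mul_le_mul_of_nonneg_right ih (by positivity : (0 : ℝ) ≤ n + 2)
    have h4 := mul_le_mul_of_nonneg_right (h2.trans (by nlinarith [h3]))
      (by positivity : (0 : ℝ) ≤ n + 3) (c := (1 - v) * (n + 2))
    nlinarith [h4]

lemma le_hypKerCoeff_succ {v : ℝ} (hv : v ≤ 1) (n : ℕ) :
    (1 - v) / 2 / (n + 1) ≤ hypKerCoeff v (n + 1) := by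
  induction n with
  | zero => simp [hypKerCoeff_succ, hypKerCoeff_zero]
  | succ n ih =>
    rw [hypKerCoeff_succ (n := n + 1)]
    push_cast
    rw [div_le_div_iff₀ (by positivity) (by positivity)]
    rw [div_le_iff₀ (by positivity)] at ih
    have h1 : (0 : ℝ) ≤ n := Nat.cast_nonneg n
    have h2 : hypKerCoeff v (n + 1) * (((n : ℝ) + 1) * (n + 3))
        ≤ hypKerCoeff v (n + 1) * (((n : ℝ) + 1 + 1) ^ 2 - v) :=
      mul_le_mul_of_nonneg_left (by nlinarith) (hypKerCoeff_nonneg hv _)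
    have h3 := mul_le_mul_of_nonneg_right ih (by positivity : (0 : ℝ) ≤ n + 3)
    have h4 := mul_le_mul_of_nonneg_right (a := (n : ℝ) + 2) (h3.trans (by nlinarith [h2]))
      (by positivity) (c := hypKerCoeff v (n + 1) * (((n : ℝ) + 1 + 1) ^ 2 - v))
    nlinarith [h4]

lemma hypKerCoeff_le_one {v : ℝ} (hv0 : 0 ≤ v) (hv : v ≤ 1) (n : ℕ) : hypKerCoeff v n ≤ 1 := by
  cases n with
  | zero => simp [hypKerCoeff_zero]
  | succ n =>
    refine (hypKerCoeff_succ_le hv0 hv n).trans ?_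
    rw [div_le_one (by positivity)]
    linarith [(Nat.cast_nonneg n : (0 : ℝ) ≤ n)]

lemma summable_hypKer {v x : ℝ} (hv0 : 0 ≤ v) (hv : v ≤ 1) (hx : |x| < 1) :
    Summable fun n : ℕ => hypKerCoeff v n * x ^ n := by
  refine Summable.of_norm_bounded (summable_geometric_of_lt_one (abs_nonneg x) hx) fun n => ?_
  rw [norm_mul, norm_pow, Real.norm_eq_abs, Real.norm_eq_abs, abs_of_nonneg (hypKerCoeff_nonneg hv n)]
  exact mul_le_of_le_one_left (by positivity) (hypKerCoeff_le_one hv0 hv n)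

lemma hypKer_zero (v : ℝ) : hypKer v 0 = 1 := by
  rw [hypKer, tsum_eq_single 0 fun n hn => by simp [hn]]
  simp [hypKerCoeff_zero]

lemma hypKer_eq_one_add {v x : ℝ} (hv0 : 0 ≤ v) (hv : v ≤ 1) (hx : |x| < 1) :
    hypKer v x = 1 + ∑' n : ℕ, hypKerCoeff v (n + 1) * x ^ (n + 1) := by
  rw [hypKer, (summable_hypKer hv0 hv hx).tsum_eq_zero_add]
  simp [hypKerCoeff_zero]

lemma le_hypKer {v x : ℝ} (hv0 : 0 ≤ v) (hv : v ≤ 1) (hx0 : 0 ≤ x) (hx : x < 1) :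
    1 + (1 - v) / 2 * (-Real.log (1 - x)) ≤ hypKer v x := by
  have hx' : |x| < 1 := by rwa [abs_of_nonneg hx0]
  rw [hypKer_eq_one_add hv0 hv hx']
  have hs := ((Real.hasSum_pow_div_log_of_abs_lt_one hx').mul_left ((1 - v) / 2))
  have hk := ((summable_nat_add_iff 1).2 (summable_hypKer hv0 hv hx')).hasSum
  have := hasSum_le (fun n => ?_) hs hk
  · linarith
  · have := mul_le_mul_of_nonneg_right (le_hypKerCoeff_succ hv n) (pow_nonneg hx0 (n + 1))
    convert this using 1
    ring

lemma hypKer_le {v x : ℝ} (hv0 : 0 ≤ v) (hv : v ≤ 1) (hx0 : 0 < x) (hx : x < 1) :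
    hypKer v x ≤ v + (1 - v) * (-Real.log (1 - x) / x) := by
  have hx' : |x| < 1 := by rwa [abs_of_pos hx0]
  rw [hypKer_eq_one_add hv0 hv hx']
  have hs := (hasSum_nat_add_iff' 1).2
    ((Real.hasSum_pow_div_log_of_abs_lt_one hx').mul_left ((1 - v) / x))
  have hk := ((summable_nat_add_iff 1).2 (summable_hypKer hv0 hv hx')).hasSum
  have := hasSum_le (fun n => ?_) hk hs
  · simp only [Finset.range_one, Finset.sum_singleton] at this
    have e : (1 - v) / x * -Real.log (1 - x) - (1 - v) / x * (x ^ (0 + 1) / ((0 : ℕ) + 1))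
        = (1 - v) * (-Real.log (1 - x) / x) - (1 - v) := by
      push_cast
      field_simp
      ring
    linarith
  · have := mul_le_mul_of_nonneg_right (hypKerCoeff_succ_le hv0 hv n) (pow_nonneg hx0.le (n + 1))
    convert this using 1
    push_cast
    field_simp
    ring

/-- Termwise differentiation of a real power series with bounded coefficients. -/
lemma hasDerivAt_tsum_mul_pow {c : ℕ → ℝ} {C : ℝ} (hc : ∀ n, |c n| ≤ C) {x : ℝ} (hx : |x| < 1) :
    HasDerivAt (fun y => ∑' n : ℕ, c n * y ^ n)
      (∑' n : ℕ, c n * (n * x ^ (n - 1))) x := by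
  obtain ⟨r, hxr, hr⟩ := exists_between hx
  have hr0 : 0 < r := (abs_nonneg x).trans_lt hxr
  have hC : 0 ≤ C := (abs_nonneg _).trans (hc 0)
  have hnorm : ‖r‖ < 1 := by rwa [Real.norm_eq_abs, abs_of_pos hr0]
  have hsum : Summable fun n : ℕ => C / r * ((n : ℝ) ^ 1 * r ^ n) :=
    (summable_pow_mul_geometric_of_norm_lt_one 1 hnorm).mul_left _
  have hbound : ∀ (n : ℕ) (y : ℝ), y ∈ Ioo (-r) r →
      ‖c n * (n * y ^ (n - 1))‖ ≤ C / r * ((n : ℝ) ^ 1 * r ^ n) := by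
    intro n y hy
    have hy' : |y| ≤ r := (abs_lt.2 hy).le
    cases n with
    | zero => simp
    | succ n =>
      rw [norm_mul, norm_mul, norm_pow, Real.norm_eq_abs, Real.norm_eq_abs, Real.norm_eq_abs,
        Nat.abs_cast, Nat.add_sub_cancel]
      calc |c (n + 1)| * (((n + 1 : ℕ) : ℝ) * |y| ^ n) ≤ C * (((n + 1 : ℕ) : ℝ) * r ^ n) := by
            gcongr
            exact hc _
        _ = C / r * (((n + 1 : ℕ) : ℝ) ^ 1 * r ^ (n + 1)) := by
            rw [pow_succ r n, pow_one]
            field_simp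
  have hzero : Summable fun n : ℕ => c n * (0 : ℝ) ^ n :=
    summable_of_ne_finset_zero (s := {0}) fun n hn => by simp [Finset.mem_singleton.not.1 hn]
  have hmem : (0 : ℝ) ∈ Ioo (-r) r := ⟨neg_neg_of_pos hr0, hr0⟩
  exact hasDerivAt_tsum_of_isPreconnected hsum isOpen_Ioo isPreconnected_Ioo
    (fun n y _ => (hasDerivAt_pow n y).const_mul (c n)) hbound hmem hzero (abs_lt.1 hxr)

lemma hyp_coeff_succ (q : ℝ) (n : ℕ) :
    (∏ i ∈ Finset.range (n + 1), (-q + i)) * (∏ i ∈ Finset.range (n + 1), (q + i)) /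
      ((∏ i ∈ Finset.range (n + 1), ((1 : ℝ) + i)) * ((n + 1).factorial))
      = -(q ^ 2 * hypKerCoeff (q ^ 2) n) / (n + 1) := by
  have h1 : ∏ i ∈ Finset.range (n + 1), ((1 : ℝ) + i) = ((n + 1).factorial : ℝ) := by
    rw [← Finset.prod_range_add_one_eq_factorial]
    push_cast
    exact Finset.prod_congr rfl fun i _ => add_comm _ _
  have h2 : (∏ i ∈ Finset.range (n + 1), (-q + i)) * (∏ i ∈ Finset.range (n + 1), (q + i))
      = -q ^ 2 * ∏ i ∈ Finset.range n, (((i : ℝ) + 1) ^ 2 - q ^ 2) := by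
    rw [← Finset.prod_mul_distrib, Finset.prod_range_succ', mul_comm]
    congr 1
    · simp
      ring
    · refine Finset.prod_congr rfl fun i _ => ?_
      push_cast
      ring
  have h := Nat.factorial_pos n
  rw [h1, h2, hypKerCoeff, Nat.factorial_succ]
  push_cast
  field_simp

lemma hasDerivAt_hyp {q x : ℝ} (hq : q ^ 2 ≤ 1) (hx : |x| < 1) :
    HasDerivAt (hyp (-q) q 1) (-(q ^ 2 * hypKer (q ^ 2) x)) x := by
  have hbound : ∀ n : ℕ, |(∏ i ∈ Finset.range n, (-q + i)) * (∏ i ∈ Finset.range n, (q + i)) /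
      ((∏ i ∈ Finset.range n, ((1 : ℝ) + i)) * (n.factorial))| ≤ 1 := by
    rintro (_ | n)
    · simp
    · have hk0 := hypKerCoeff_nonneg hq n
      have hk1 := hypKerCoeff_le_one (sq_nonneg q) hq n
      rw [hyp_coeff_succ, abs_div, abs_neg, abs_of_nonneg (by positivity),
        abs_of_pos (by positivity), div_le_one (by positivity)]
      nlinarith [sq_nonneg q, (Nat.cast_nonneg n : (0 : ℝ) ≤ n)]
  have h := hasDerivAt_tsum_mul_pow hbound hx
  have hs : Summable fun n : ℕ => ((∏ i ∈ Finset.range n, (-q + i)) *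
      (∏ i ∈ Finset.range n, (q + i)) / ((∏ i ∈ Finset.range n, ((1 : ℝ) + i)) *
      (n.factorial))) * (n * x ^ (n - 1)) := by
    refine (summable_nat_add_iff 1).1 (((summable_hypKer (sq_nonneg q) hq hx).mul_left
      (-q ^ 2)).congr fun n => ?_)
    rw [hyp_coeff_succ, Nat.add_sub_cancel]
    push_cast
    field_simp
  change HasDerivAt (fun y => hyp (-q) q 1 y) _ x
  simp only [hyp]
  refine h.congr_deriv ?_
  rw [hs.tsum_eq_zero_add, hypKer, ← tsum_mul_left, ← tsum_neg]
  simp only [Nat.cast_zero, zero_mul, mul_zero, zero_add]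
  refine tsum_congr fun n => ?_
  rw [hyp_coeff_succ, Nat.add_sub_cancel]
  push_cast
  field_simp

lemma hyp_zero (a b c : ℝ) : hyp a b c 0 = 1 := by
  rw [hyp, tsum_eq_single 0 fun n hn => by simp [hn]]
  simp

lemma mul_hypKer_lt_hypKer {u x : ℝ} (hu0 : 0 ≤ u) (hu : u ≤ 1) (hx0 : 0 < x) (hx1 : x < 1) :
    x * hypKer (2 * u / 3) (1 - x ^ 3) < hypKer u (1 - x ^ 2) := by
  have hx2 : x ^ 2 < 1 := pow_lt_one₀ hx0.le hx1 two_ne_zero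
  have hx3 : x ^ 3 < 1 := pow_lt_one₀ hx0.le hx1 three_ne_zero
  have hlow := le_hypKer hu0 hu (x := 1 - x ^ 2) (by linarith) (by linarith [pow_pos hx0 2])
  have hupp := hypKer_le (v := 2 * u / 3) (by linarith) (by linarith) (x := 1 - x ^ 3)
    (by linarith) (by linarith [pow_pos hx0 3])
  rw [sub_sub_cancel, Real.log_pow] at hlow hupp
  push_cast at hlow hupp
  set l := -Real.log x with hl
  have hl0 : 0 < l := neg_pos.2 (Real.log_neg hx0 hx1)
  have hlx : x * l ≤ 1 - x := by
    have h := Real.one_sub_inv_le_log_of_pos hx0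
    have h' := mul_le_mul_of_nonneg_left h hx0.le
    rw [mul_sub, mul_inv_cancel₀ hx0.ne'] at h'
    linarith
  have hd : 0 < 1 - x ^ 3 := by linarith
  set m := l / (1 - x ^ 3) with hm
  have hlm : l = m * (1 - x ^ 3) := by rw [hm, div_mul_cancel₀ _ hd.ne']
  have hm0 : 0 < m := div_pos hl0 hd
  have hxm : x * m * (1 + x + x ^ 2) ≤ 1 := by
    have : x * m * (1 + x + x ^ 2) * (1 - x) ≤ 1 * (1 - x) := by
      rw [hlm] at hlx
      linarith
    exact le_of_mul_le_mul_right this (by linarith)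
  have hfirst : 3 * (x * m) < 1 + l := by
    have : 0 < m * (1 - x) ^ 2 * x * (1 + x) := by
      have := sub_pos.2 hx1
      positivity
    nlinarith
  have hsecond : x * (2 / 3 + m) < 1 := by
    have h1 : x * (2 / 3 + m) * (1 + x + x ^ 2) < 1 * (1 + x + x ^ 2) := by
      nlinarith [mul_pos hx0 (sub_pos.2 hx1), mul_pos (pow_pos hx0 2) (sub_pos.2 hx1)]
    exact lt_of_mul_lt_mul_right h1 (by positivity)
  have hupp' : hypKer (2 * u / 3) (1 - x ^ 3) ≤ 2 * u / 3 + (1 - 2 * u / 3) * (3 * m) := by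
    convert hupp using 3
    rw [hm, hl]
    ring
  have hlow' : 1 + (1 - u) * l ≤ hypKer u (1 - x ^ 2) := by
    convert hlow using 1
    rw [hl]
    ring
  refine (mul_le_mul_of_nonneg_left hupp' hx0.le).trans_lt (lt_of_lt_of_le ?_ hlow')
  rcases hu.lt_or_eq with hu' | rfl
  · nlinarith [mul_lt_mul_of_pos_left hfirst (sub_pos.2 hu'),
      mul_le_mul_of_nonneg_left hsecond.le hu0]
  · nlinarith

lemma hasDerivAt_hyp_comp {q x : ℝ} (k : ℕ) (hq : q ^ 2 ≤ 1) (hx0 : 0 < x) (hx1 : x ≤ 1) :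
    HasDerivAt (fun y => hyp (-q) q 1 (1 - y ^ k))
      (q ^ 2 * hypKer (q ^ 2) (1 - x ^ k) * (k * x ^ (k - 1))) x := by
  have hk : |1 - x ^ k| < 1 := by
    have := pow_pos hx0 k
    have := pow_le_one₀ hx0.le hx1 (n := k)
    rw [abs_lt]
    constructor <;> linarith
  have h := (hasDerivAt_hyp hq hk).comp x ((hasDerivAt_pow k x).const_sub 1)
  exact h.congr_deriv (by ring)

lemma hyp_sq_lt_hyp_cube {p q x : ℝ} (hp0 : 0 < p) (hp1 : p ≤ 1) (hq : q ^ 2 = 2 * p ^ 2 / 3)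
    (hx0 : 0 < x) (hx1 : x < 1) :
    hyp (-p) p 1 (1 - x ^ 2) < hyp (-q) q 1 (1 - x ^ 3) := by
  have hp2 : p ^ 2 ≤ 1 := pow_le_one₀ hp0.le hp1
  have hq2 : q ^ 2 ≤ 1 := by linarith
  have hderiv : ∀ y, 0 < y → y ≤ 1 → HasDerivAt
      (fun y => hyp (-q) q 1 (1 - y ^ 3) - hyp (-p) p 1 (1 - y ^ 2)) _ y :=
    fun y h0 h1 => (hasDerivAt_hyp_comp 3 hq2 h0 h1).sub (hasDerivAt_hyp_comp 2 hp2 h0 h1)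
  have hanti : StrictAntiOn
      (fun y => hyp (-q) q 1 (1 - y ^ 3) - hyp (-p) p 1 (1 - y ^ 2)) (Icc x 1) := by
    refine strictAntiOn_of_deriv_neg (convex_Icc x 1) (fun y hy =>
      (hderiv y (hx0.trans_le hy.1) hy.2).continuousAt.continuousWithinAt) fun y hy => ?_
    rw [interior_Icc] at hy
    have hy0 := hx0.trans hy.1
    rw [(hderiv y hy0 hy.2.le).deriv, hq]
    have := mul_lt_mul_of_pos_left (mul_hypKer_lt_hypKer (sq_nonneg p) hp2 hy0 hy.2)
      (by positivity : 0 < 2 * p ^ 2 * y)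
    push_cast
    linarith
  have h := hanti ⟨le_rfl, hx1.le⟩ ⟨hx1.le, le_rfl⟩ hx1
  simp only [one_pow, sub_self, hyp_zero] at h
  linarith

lemma three_mul_sq_le_of_hyp_lt {p q : ℝ} (hp : p ^ 2 ≤ 1) (hq : q ^ 2 ≤ 1)
    (h : ∀ x ∈ Ioo (0 : ℝ) 1, hyp (-p) p 1 (1 - x ^ 2) < hyp (-q) q 1 (1 - x ^ 3)) :
    3 * q ^ 2 ≤ 2 * p ^ 2 := by
  have hderiv := (hasDerivAt_hyp_comp 3 hq one_pos le_rfl).sub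
    (hasDerivAt_hyp_comp 2 hp one_pos le_rfl)
  have hslope := (hasDerivAt_iff_tendsto_slope.1 hderiv).mono_left
    (nhdsLT_le_nhdsNE (1 : ℝ))
  have hle := le_of_tendsto hslope (b := 0) <| by
    filter_upwards [Ioo_mem_nhdsLT (zero_lt_one' ℝ)] with y hy
    rw [slope_def_field]
    refine div_nonpos_of_nonneg_of_nonpos ?_ (by linarith [hy.2])
    simp only [Pi.sub_apply, one_pow, sub_self, hyp_zero]
    linarith [h y hy]
  simp only [one_pow, sub_self, hypKer_zero] at hle
  push_cast at hle
  linarith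

theorem stmt19 (a₀ a : ℝ)
    (ha₀ : a₀ ∈ Ioo (0:ℝ) 1)
    (hroot : 4 * a₀ * (2 - a₀) * (1 - a₀) ^ 2 * (a₀ ^ 2 - 2 * a₀ + 2) ^ 2 = 1)
    (hmin : ∀ x ∈ Ioo (0:ℝ) 1,
      4 * x * (2 - x) * (1 - x) ^ 2 * (x ^ 2 - 2 * x + 2) ^ 2 = 1 → a₀ ≤ x)
    (ha : a ∈ Ico a₀ 1) :
    sSup {δ : ℝ | δ ∈ Ioo (a - 1) 0 ∧ ∀ x ∈ Ioo (0:ℝ) 1,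
        hyp (a - 1) (1 - a) 1 (1 - x ^ 2) < hyp (a - 1 - δ) (1 - a + δ) 1 (1 - x ^ 3)}
      = (Real.sqrt 6 / 3 - 1) * (1 - a) := by
  have ha0 : 0 < a := ha₀.1.trans_le ha.1
  have hp0 : 0 < 1 - a := sub_pos.2 ha.2
  have hsq : Real.sqrt 6 ^ 2 = 6 := Real.sq_sqrt (by norm_num)
  have hs0 : 0 < Real.sqrt 6 := Real.sqrt_pos.2 (by norm_num)
  have hs3 : Real.sqrt 6 < 3 := by nlinarith
  have hneg : ∀ δ : ℝ, a - 1 - δ = -(1 - a + δ) := fun δ => by ring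
  have hneg' : a - 1 = -(1 - a) := by ring
  refine IsGreatest.csSup_eq ⟨⟨⟨?_, ?_⟩, fun x hx => ?_⟩, fun δ hδ => ?_⟩
  · nlinarith
  · nlinarith
  · rw [hneg, hneg']
    refine hyp_sq_lt_hyp_cube hp0 (by linarith) ?_ hx.1 hx.2
    linear_combination (1 - a) ^ 2 / 9 * hsq
  · obtain ⟨⟨hδ1, hδ0⟩, hlt⟩ := hδ
    have hq0 : 0 < 1 - a + δ := by linarith
    have h := three_mul_sq_le_of_hyp_lt (p := 1 - a) (q := 1 - a + δ) (by nlinarith)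
      (by nlinarith) fun x hx => by
        have := hlt x hx
        rwa [hneg, hneg'] at this
    have : 1 - a + δ ≤ Real.sqrt 6 / 3 * (1 - a) := by
      refine le_of_sq_le_sq ?_ (by positivity)
      rw [mul_pow, div_pow, hsq]
      linarith
    linarith
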